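/- For words over the four-letter alphabet {a, a⁻¹, b, b⁻¹}, the number of reduced bracelets of length n (equivalence classes of freely and cyclically reduced words under the equivalence generated by cyclic rotation and group-theoretic inversion) is: 2 for n = 1, 4 for n = 2, 6 for n = 3, 13 for n = 4, 26 for n = 5, 66 for n = 6, 158 for n = 7, 418 for n = 8, 1098 for n = 9, and 2968 for n = 10. -/

import Mathlib

/-- The group-theoretic inverse of a letter in the alphabet `{a, a⁻¹, b, b⁻¹}`,
where a letter is a pair (generator, sign). -/
def invLetter (x : Fin 2 × Bool) : Fin 2 × Bool := (x.1, !x.2)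

/-- The group-theoretic inverse of a word: reverse the word and invert each letter. -/
def wordInv (l : List (Fin 2 × Bool)) : List (Fin 2 × Bool) := (l.map invLetter).reverse

/-- A word is freely reduced if no two adjacent letters are mutually inverse. -/
def FreelyReduced (l : List (Fin 2 × Bool)) : Prop :=
  l.Chain' (fun x y => y ≠ invLetter x)

/-- A word is cyclically reduced if it is freely reduced and its first letter is
not the inverse of its last letter. -/
def CyclicallyReduced (l : List (Fin 2 × Bool)) : Prop :=
  FreelyReduced l ∧ ∀ x ∈ l.head?, ∀ y ∈ l.getLast?, x ≠ invLetter y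

/-- The type of freely and cyclically reduced words of length `n` over the
alphabet `{a, a⁻¹, b, b⁻¹}`. -/
def CRWord (n : ℕ) := {l : List (Fin 2 × Bool) // l.length = n ∧ CyclicallyReduced l}

/-- One basic move between cyclically reduced words: a cyclic rotation or a
group-theoretic inversion.  Reduced bracelets are the classes of the
equivalence relation generated by these moves. -/
def braceletStep (n : ℕ) (x y : CRWord n) : Prop :=
  y.val = x.val.rotate 1 ∨ y.val = wordInv x.val

/-- The number of reduced bracelets of length `n`: the number of equivalence
classes of freely and cyclically reduced words of length `n` under the
equivalence generated by rotation and inversion. -/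
noncomputable def braceletCount (n : ℕ) : ℕ := Nat.card (Quot (braceletStep n))

/-!
Cyclic words of length `n` over an alphabet of `m` letters, with inversion free of fixed points,
carry an action of the dihedral group of order `2 * n` by rotations and inversions, whose orbits are
the bracelets, and Burnside's lemma counts them. A reflection has no fixed points: it would make a
letter its own inverse or put mutually inverse letters side by side. The words fixed by the rotation
through `k` are the repetitions of cyclic words of length `d = gcd n k`. Those are the closed walks
of length `d` in the digraph of admissible adjacencies, so their number is the trace of `A ^ d`,
where `A ^ 2 = (m - 2) • J + 1` for the all-ones matrix `J`.
-/

section ClosedWalk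

variable {α : Type*}

/-- Closed walks of length `n` in the digraph with edge relation `R`, with vertices indexed
cyclically by `ZMod n`. For `n = 0` these are the bi-infinite walks. -/
structure ClosedWalk (R : α → α → Prop) (n : ℕ) where
  toFun : ZMod n → α
  rel_add_one (i : ZMod n) : R (toFun i) (toFun (i + 1))

namespace ClosedWalk

variable {R : α → α → Prop} {n : ℕ}

instance : FunLike (ClosedWalk R n) (ZMod n) α where
  coe := toFun
  coe_injective w w' h := by cases w; cases w'; congr

theorem rel (w : ClosedWalk R n) (i : ZMod n) : R (w i) (w (i + 1)) := w.rel_add_one i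

instance [Finite α] [NeZero n] : Finite (ClosedWalk R n) := DFunLike.finite _

/-- Being a closed walk as a property of functions on `ZMod n`. -/
def equivSubtype : ClosedWalk R n ≃ {f : ZMod n → α // ∀ i, R (f i) (f (i + 1))} where
  toFun w := ⟨w, w.rel⟩
  invFun f := ⟨f.1, f.2⟩

/-- The closed walk of length `n` obtained by running `n / d` times through a closed walk of
length `d`. -/
def wrap {d : ℕ} (hd : d ∣ n) (w : ClosedWalk R d) : ClosedWalk R n :=
  ⟨fun i ↦ w (ZMod.castHom hd (ZMod d) i), fun i ↦ by
    simpa only [map_add, map_one] using w.rel (ZMod.castHom hd (ZMod d) i)⟩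

theorem wrap_apply {d : ℕ} (hd : d ∣ n) (w : ClosedWalk R d) (i : ZMod n) :
    wrap hd w i = w (ZMod.castHom hd (ZMod d) i) := rfl

end ClosedWalk

theorem periodic_gcd_of_periodic {n : ℕ} [NeZero n] {f : ZMod n → α} {k : ZMod n}
    (h : Function.Periodic f k) : Function.Periodic f (n.gcd k.val : ZMod n) := by
  have bezout : (n.gcd k.val : ZMod n) = n.gcdB k.val • k := by
    have := congrArg (Int.cast : ℤ → ZMod n) (Nat.gcd_eq_gcd_ab n k.val)
    simpa [mul_comm] using this
  exact bezout ▸ h.zsmul _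

theorem eq_of_periodic_of_castHom_eq {n d : ℕ} [NeZero n] (hd : d ∣ n) {f : ZMod n → α}
    (h : Function.Periodic f (d : ZMod n)) {x y : ZMod n}
    (hxy : ZMod.castHom hd (ZMod d) x = ZMod.castHom hd (ZMod d) y) : f x = f y := by
  have hker : ZMod.castHom hd (ZMod d) ((x - y).val : ZMod n) = 0 := by
    rw [ZMod.natCast_zmod_val, map_sub, hxy, sub_self]
  rw [map_natCast, ZMod.natCast_eq_zero_iff] at hker
  obtain ⟨c, hc⟩ := hker
  have hx : x = y + c * (d : ZMod n) := by
    rw [← sub_eq_iff_eq_add', ← ZMod.natCast_zmod_val (x - y), hc, Nat.cast_mul, mul_comm]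
  rw [hx, h.nat_mul c y]

namespace ClosedWalk

variable {R : α → α → Prop} {n : ℕ}

theorem wrap_injective {d : ℕ} (hd : d ∣ n) :
    Function.Injective (wrap hd : ClosedWalk R d → ClosedWalk R n) := fun w w' h ↦
  DFunLike.ext _ _ fun j ↦ by
    obtain ⟨i, rfl⟩ := ZMod.castHom_surjective hd j
    exact DFunLike.congr_fun h i

theorem range_wrap [NeZero n] {d : ℕ} (hd : d ∣ n) :
    Set.range (wrap hd : ClosedWalk R d → ClosedWalk R n) =
      {w : ClosedWalk R n | Function.Periodic w (d : ZMod n)} := by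
  refine Set.Subset.antisymm ?_ fun w hw ↦ ?_
  · rintro _ ⟨w, rfl⟩ i
    rw [wrap_apply, wrap_apply, map_add, map_natCast, ZMod.natCast_self, add_zero]
  · have surj := ZMod.castHom_surjective hd
    have apply_eq {x y : ZMod n} := eq_of_periodic_of_castHom_eq (x := x) (y := y) hd hw
    have apply_succ (j : ZMod d) :
        w (Function.surjInv surj (j + 1)) = w (Function.surjInv surj j + 1) :=
      apply_eq (by simp only [map_add, map_one, Function.surjInv_eq surj])
    refine ⟨⟨fun j ↦ w (Function.surjInv surj j), fun j ↦ ?_⟩,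
      DFunLike.ext _ _ fun i ↦ apply_eq (Function.surjInv_eq surj _)⟩
    rw [apply_succ]
    exact w.rel _

theorem card_periodic [NeZero n] (k : ZMod n) :
    Nat.card {w : ClosedWalk R n | Function.Periodic w k} =
      Nat.card (ClosedWalk R (n.gcd k.val)) := by
  have hperiod : {w : ClosedWalk R n | Function.Periodic w k} =
      {w : ClosedWalk R n | Function.Periodic w (n.gcd k.val : ZMod n)} := by
    refine Set.ext fun w ↦ ⟨periodic_gcd_of_periodic, fun h ↦ ?_⟩
    obtain ⟨c, hc⟩ := n.gcd_dvd_right k.val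
    have hk : k = c * (n.gcd k.val : ZMod n) := by
      rw [← Nat.cast_mul, mul_comm, ← hc, ZMod.natCast_zmod_val]
    exact hk ▸ h.nat_mul c
  rw [hperiod, ← range_wrap (n.gcd_dvd_left _), Nat.card_range_of_injective (wrap_injective _)]

end ClosedWalk

section Trace

variable {S : Type*} [Fintype α] [DecidableEq α] [CommSemiring S]

theorem pow_succ_apply_eq_sum_prod (M : Matrix α α S) (n : ℕ) (a b : α) :
    (M ^ (n + 1)) a b =
      ∑ p : Fin n → α, ∏ i : Fin (n + 1),
        M ((Fin.cons a p : Fin (n + 1) → α) i) ((Fin.snoc p b : Fin (n + 1) → α) i) := by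
  induction n generalizing a with
  | zero => simp [Fin.snoc]
  | succ n ih =>
    rw [pow_succ', Matrix.mul_apply, ← (Fin.consEquiv fun _ ↦ α).sum_comp, Fintype.sum_prod_type]
    refine Fintype.sum_congr _ _ fun c ↦ ?_
    rw [ih, Finset.mul_sum]
    refine Fintype.sum_congr _ _ fun p ↦ ?_
    simp [Fin.consEquiv, Fin.prod_univ_succ (n := n + 1), ← Fin.cons_snoc_eq_snoc_cons]

theorem trace_pow_succ_eq_sum_prod (M : Matrix α α S) (n : ℕ) :
    (M ^ (n + 1)).trace = ∑ f : Fin (n + 1) → α, ∏ i, M (f i) (f (i + 1)) := by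
  rw [← (Fin.consEquiv fun _ ↦ α).sum_comp, Fintype.sum_prod_type]
  refine Fintype.sum_congr _ _ fun a ↦ ?_
  rw [Matrix.diag_apply, pow_succ_apply_eq_sum_prod]
  refine Fintype.sum_congr _ _ fun p ↦ Fintype.prod_congr _ _ fun i ↦ ?_
  have snoc_eq_cons_add_one :
      (Fin.snoc p a : Fin (n + 1) → α) i = (Fin.cons a p : Fin (n + 1) → α) (i + 1) := by
    induction i using Fin.lastCases <;> simp
  rw [snoc_eq_cons_add_one]
  rfl

/-- The adjacency matrix of the digraph with edge relation `R`. -/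
def relMatrix (R : α → α → Prop) [DecidableRel R] (S : Type*) [Zero S] [One S] : Matrix α α S :=
  Matrix.of fun x y ↦ if R x y then 1 else 0

theorem natCast_card_closedWalk (R : α → α → Prop) [DecidableRel R] (n : ℕ) [NeZero n] :
    (Nat.card (ClosedWalk R n) : S) = (relMatrix R S ^ n).trace := by
  obtain ⟨m, rfl⟩ := Nat.exists_eq_add_one_of_ne_zero (NeZero.ne n)
  have card_eq : Nat.card (ClosedWalk R (m + 1)) =
      Finset.card {f : Fin (m + 1) → α | ∀ i, R (f i) (f (i + 1))} := by
    rw [Nat.card_congr ClosedWalk.equivSubtype, ← Fintype.card_subtype, ← Nat.card_eq_fintype_card]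
    rfl
  simp only [card_eq, Finset.natCast_card_filter, trace_pow_succ_eq_sum_prod, relMatrix,
    Matrix.of_apply, Fintype.prod_boole]
  congr!

end Trace

end ClosedWalk

section CyclicWord

open Nat

/-- Cyclic words of length `n` over a symmetric alphabet in which no letter is followed, cyclically,
by its inverse. -/
abbrev CyclicWord (α : Type*) [Inv α] (n : ℕ) : Type _ := ClosedWalk (fun x y : α ↦ y ≠ x⁻¹) n

variable {α : Type*} [InvolutiveInv α]

section Count

/-- The `0`-`1` matrix recording which pairs of letters may be adjacent in a reduced word. -/
abbrev adjacencyMatrix (α : Type*) [Inv α] [DecidableEq α] : Matrix α α ℤ :=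
  relMatrix (fun x y : α ↦ y ≠ x⁻¹) ℤ

/-- The matrix all of whose entries are `1`. -/
def allOnes (α : Type*) : Matrix α α ℤ := Matrix.of fun _ _ ↦ 1

theorem trace_allOnes (α : Type*) [Fintype α] : (allOnes α).trace = Fintype.card α := by
  simp [allOnes, Matrix.trace]

variable [DecidableEq α]

theorem adjacencyMatrix_apply (x y : α) :
    adjacencyMatrix α x y = 1 - if x = y⁻¹ then 1 else 0 := by
  simp only [relMatrix, Matrix.of_apply, ne_eq, ite_not, ← inv_eq_iff_eq_inv (a := x),
    eq_comm (a := y)]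
  split_ifs <;> rfl

variable [Fintype α]

theorem allOnes_mul_adjacencyMatrix_pow (n : ℕ) :
    allOnes α * adjacencyMatrix α ^ n = ((Fintype.card α : ℤ) - 1) ^ n • allOnes α := by
  have base : allOnes α * adjacencyMatrix α = ((Fintype.card α : ℤ) - 1) • allOnes α := by
    ext x y
    simp [allOnes, Matrix.mul_apply, adjacencyMatrix_apply, Finset.sum_sub_distrib]
  induction n with
  | zero => simp
  | succ n ih => rw [pow_succ, ← mul_assoc, ih, smul_mul_assoc, base, smul_smul, pow_succ]

theorem adjacencyMatrix_sq :
    adjacencyMatrix α ^ 2 = ((Fintype.card α : ℤ) - 2) • allOnes α + 1 := by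
  ext x y
  simp only [sq, Matrix.mul_apply, adjacencyMatrix_apply, allOnes, Matrix.add_apply,
    Matrix.smul_apply, Matrix.of_apply, Matrix.one_apply, smul_eq_mul, mul_sub, mul_one, mul_ite,
    mul_zero, Finset.sum_sub_distrib, Finset.sum_const, Finset.card_univ, Int.nsmul_eq_mul,
    ← inv_eq_iff_eq_inv (a := x), Finset.sum_ite_eq, Finset.sum_ite_eq', Finset.mem_univ, if_true,
    inv_inj]
  ring

theorem trace_adjacencyMatrix_pow (hα : ∀ x : α, x⁻¹ ≠ x) (n : ℕ) :
    (adjacencyMatrix α ^ n).trace =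
      ((Fintype.card α : ℤ) - 1) ^ n + if Even n then (Fintype.card α : ℤ) - 1 else 1 := by
  induction n using Nat.twoStepInduction with
  | zero => simp
  | one => simp [Matrix.trace, adjacencyMatrix_apply, fun x ↦ (hα x).symm]
  | more n ih _ =>
    rw [pow_add _ n, pow_mul_comm, adjacencyMatrix_sq, add_mul, one_mul, smul_mul_assoc,
      allOnes_mul_adjacencyMatrix_pow, Matrix.trace_add, Matrix.trace_smul, Matrix.trace_smul,
      trace_allOnes, ih]
    simp only [smul_eq_mul, Nat.even_add, even_two, iff_true]
    ring

end Count

theorem card_cyclicWord [Fintype α] (hα : ∀ x : α, x⁻¹ ≠ x) (n : ℕ) [NeZero n] :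
    (Nat.card (CyclicWord α n) : ℤ) =
      ((Fintype.card α : ℤ) - 1) ^ n + if Even n then (Fintype.card α : ℤ) - 1 else 1 := by
  classical
  rw [natCast_card_closedWalk, trace_adjacencyMatrix_pow hα]

namespace CyclicWord

variable {n : ℕ}

/-- Rotations translate the indices; the reflections reverse a word and invert its letters.
The normalisation makes `r 1` the rotation by one place and `sr 0` the inversion of words. -/
instance : MulAction (DihedralGroup n) (CyclicWord α n) where
  smul
    | .r k, w => ⟨fun i ↦ w (i + k), fun i ↦ add_right_comm i 1 k ▸ w.rel (i + k)⟩
    | .sr k, w => ⟨fun i ↦ (w (k - 1 - i))⁻¹, fun i h ↦ by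
        refine w.rel (k - 1 - (i + 1)) ?_
        rw [h, inv_inv]
        congr 1
        ring⟩
  one_smul w := DFunLike.ext _ _ fun i ↦ congrArg w (add_zero i)
  mul_smul g h w := DFunLike.ext _ _ fun i ↦ by
    cases g <;> cases h
    · exact congrArg w (by ring)
    · exact congrArg (fun j ↦ (w j)⁻¹) (by ring)
    · exact congrArg (fun j ↦ (w j)⁻¹) (by ring)
    · exact (congrArg w (by ring)).trans (inv_inv _).symm

theorem r_smul_apply (k : ZMod n) (w : CyclicWord α n) (i : ZMod n) :
    (DihedralGroup.r k • w) i = w (i + k) := rfl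

theorem sr_smul_apply (k : ZMod n) (w : CyclicWord α n) (i : ZMod n) :
    (DihedralGroup.sr k • w) i = (w (k - 1 - i))⁻¹ := rfl

theorem fixedBy_r (k : ZMod n) :
    MulAction.fixedBy (CyclicWord α n) (DihedralGroup.r k) =
      {w : CyclicWord α n | Function.Periodic w k} :=
  Set.ext fun _ ↦ DFunLike.ext_iff

/-- The reflection `i ↦ k - 1 - i` of `ZMod n` either fixes a letter position, which would force a
letter to be its own inverse, or exchanges two adjacent ones, which would be mutually inverse. -/
theorem sr_smul_ne (hα : ∀ x : α, x⁻¹ ≠ x) (k : ZMod n) (w : CyclicWord α n) :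
    DihedralGroup.sr k • w ≠ w := fun hfix ↦ by
  have letter_eq (i : ZMod n) : (w (k - 1 - i))⁻¹ = w i := DFunLike.congr_fun hfix i
  obtain ⟨z, rfl⟩ := ZMod.intCast_surjective k
  obtain ⟨m, rfl | rfl⟩ := Int.even_or_odd' z
  · refine w.rel (m - 1) ?_
    rw [sub_add_cancel, ← letter_eq m]
    congr 2
    push_cast
    ring
  · refine hα (w m) ?_
    convert letter_eq m using 3
    push_cast
    ring

end CyclicWord

theorem sum_gcd_val_eq_sum_divisors {M : Type*} [AddCommMonoid M] (n : ℕ) [NeZero n] (f : ℕ → M) :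
    ∑ k : ZMod n, f (n.gcd k.val) = ∑ d ∈ n.divisors, φ (n / d) • f d := by
  obtain ⟨m, rfl⟩ := Nat.exists_eq_add_one_of_ne_zero (NeZero.ne n)
  calc ∑ k : ZMod (m + 1), f ((m + 1).gcd k.val)
      = ∑ k ∈ Finset.range (m + 1), f ((m + 1).gcd k) :=
        (Finset.sum_range fun k ↦ f ((m + 1).gcd k)).symm
    _ = ∑ d ∈ (m + 1).divisors, ∑ k ∈ Finset.range (m + 1) with (m + 1).gcd k = d, f d :=
        (Finset.sum_fiberwise_of_maps_to'
          (fun _ _ ↦ Nat.mem_divisors.2 ⟨Nat.gcd_dvd_left _ _, m.succ_ne_zero⟩) f).symm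
    _ = ∑ d ∈ (m + 1).divisors, φ ((m + 1) / d) • f d :=
        Finset.sum_congr rfl fun d hd ↦ by
          rw [Finset.sum_const, Nat.totient_div_of_dvd (Nat.dvd_of_mem_divisors hd)]

theorem card_dihedral_orbits_cyclicWord [Finite α] (hα : ∀ x : α, x⁻¹ ≠ x) (n : ℕ) [NeZero n] :
    Nat.card (MulAction.orbitRel.Quotient (DihedralGroup n) (CyclicWord α n)) * (2 * n) =
      ∑ d ∈ n.divisors, φ (n / d) * Nat.card (CyclicWord α d) := by
  classical
  have := Fintype.ofFinite (CyclicWord α n)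
  have := Fintype.ofFinite (MulAction.orbitRel.Quotient (DihedralGroup n) (CyclicWord α n))
  have no_fixed (k : ZMod n) :
      Fintype.card (MulAction.fixedBy (CyclicWord α n) (DihedralGroup.sr k)) = 0 :=
    Fintype.card_eq_zero_iff.2 ⟨fun w ↦ CyclicWord.sr_smul_ne hα k w.1 w.2⟩
  have fixed (k : ZMod n) :
      Fintype.card (MulAction.fixedBy (CyclicWord α n) (DihedralGroup.r k)) =
        Nat.card (CyclicWord α (n.gcd k.val)) := by
    rw [← Nat.card_eq_fintype_card, CyclicWord.fixedBy_r]
    exact ClosedWalk.card_periodic k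
  rw [Nat.card_eq_fintype_card, ← DihedralGroup.card (n := n),
    ← MulAction.sum_card_fixedBy_eq_card_orbits_mul_card_group,
    ← DihedralGroup.equivSum.symm.sum_comp, Fintype.sum_sum_type]
  simp only [DihedralGroup.equivSum_symm_apply, no_fixed, fixed, Finset.sum_const_zero, add_zero]
  exact sum_gcd_val_eq_sum_divisors n fun d ↦ Nat.card (CyclicWord α d)

end CyclicWord

section Orbits

variable {G X : Type*} [Group G] [MulAction G X]

theorem orbitRel_iff_eqvGen_of_closure_eq_top {S : Set G} (hS : Subgroup.closure S = ⊤) {x y : X} :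
    MulAction.orbitRel G X x y ↔ Relation.EqvGen (fun x y ↦ ∃ g ∈ S, g • x = y) x y := by
  constructor
  · rintro ⟨g, rfl⟩
    have hg : g ∈ Subgroup.closure S := hS ▸ Subgroup.mem_top g
    refine .symm _ _ ?_
    induction hg using Subgroup.closure_induction generalizing y with
    | mem g hg => exact .rel _ _ ⟨g, hg, rfl⟩
    | one => simpa only [one_smul] using .refl y
    | mul g h _ _ ihg ihh => simpa only [mul_smul] using ihh.trans _ _ _ ihg
    | inv g _ ih => simpa only [smul_inv_smul] using (ih (y := g⁻¹ • y)).symm _ _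
  · intro h
    induction h with
    | rel x y h =>
      obtain ⟨g, -, rfl⟩ := h
      exact (MulAction.orbitRel G X).symm ⟨g, rfl⟩
    | refl x => exact (MulAction.orbitRel G X).refl x
    | symm x y _ ih => exact (MulAction.orbitRel G X).symm ih
    | trans x y z _ _ ihxy ihyz => exact (MulAction.orbitRel G X).trans ihxy ihyz

/-- The orbits are the classes of the equivalence relation generated by the moves `x ↦ g • x`, with
`g` in a generating set. -/
def quotSMulEquivOrbits {S : Set G} (hS : Subgroup.closure S = ⊤) :
    Quot (fun x y : X ↦ ∃ g ∈ S, g • x = y) ≃ MulAction.orbitRel.Quotient G X where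
  toFun := Quot.lift (Quotient.mk _) fun _ _ h ↦
    Quotient.sound ((orbitRel_iff_eqvGen_of_closure_eq_top hS).2 (.rel _ _ h))
  invFun := Quotient.lift (Quot.mk _) fun _ _ h ↦
    Quot.eqvGen_sound ((orbitRel_iff_eqvGen_of_closure_eq_top hS).1 h)
  left_inv := by rintro ⟨x⟩; rfl
  right_inv := by rintro ⟨x⟩; rfl

theorem dihedralGroup_closure_r_one_sr_zero (n : ℕ) :
    Subgroup.closure {DihedralGroup.r (1 : ZMod n), DihedralGroup.sr 0} = ⊤ := by
  have r_mem (k : ZMod n) :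
      DihedralGroup.r k ∈ Subgroup.closure {DihedralGroup.r (1 : ZMod n), DihedralGroup.sr 0} := by
    obtain ⟨m, rfl⟩ := ZMod.intCast_surjective k
    rw [← DihedralGroup.r_one_zpow]
    exact zpow_mem (Subgroup.subset_closure (Set.mem_insert _ _)) m
  refine eq_top_iff.2 fun g _ ↦ ?_
  cases g with
  | r k => exact r_mem k
  | sr k =>
    rw [← zero_add k, ← DihedralGroup.sr_mul_r]
    exact mul_mem (Subgroup.subset_closure (Set.mem_insert_of_mem _ rfl)) (r_mem k)

end Orbits

section Bracelet

open DihedralGroup Nat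

instance : InvolutiveInv (Fin 2 × Bool) where
  inv := invLetter
  inv_inv x := by simp [invLetter]

theorem cyclicallyReduced_ofFn_iff {n : ℕ} (f : Fin (n + 1) → Fin 2 × Bool) :
    CyclicallyReduced (List.ofFn f) ↔ ∀ i, f (i + 1) ≠ (f i)⁻¹ := by
  have freelyReduced_iff : FreelyReduced (List.ofFn f) ↔
      ∀ i : Fin n, f (i.castSucc + 1) ≠ (f i.castSucc)⁻¹ := by
    simp only [Fin.coeSucc_eq_succ]
    exact List.isChain_ofFn.trans
      ⟨fun h i ↦ h i (Nat.succ_lt_succ i.2), fun h i hi ↦ h ⟨i, Nat.lt_of_succ_lt_succ hi⟩⟩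
  have last_first_iff :
      (∀ x ∈ (List.ofFn f).head?, ∀ y ∈ (List.ofFn f).getLast?, x ≠ invLetter y) ↔
        f (Fin.last n + 1) ≠ (f (Fin.last n))⁻¹ := by
    rw [List.getLast?_eq_getLast_of_ne_nil (by simp), List.getLast_ofFn_succ, Fin.last_add_one]
    simp only [List.ofFn_succ, List.head?_cons, Option.mem_def, Option.some.injEq, ne_eq,
      forall_eq']
    rfl
  rw [CyclicallyReduced, freelyReduced_iff, last_first_iff, Fin.forall_fin_succ']

theorem ofFn_add_one {α : Type*} {n : ℕ} (f : Fin (n + 1) → α) :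
    List.ofFn (fun i ↦ f (i + 1)) = (List.ofFn f).rotate 1 := by
  refine List.ext_getElem (by simp) fun i _ _ ↦ ?_
  rw [List.getElem_rotate, List.getElem_ofFn, List.getElem_ofFn]
  congr 1
  ext
  simp [Fin.val_add]

theorem ofFn_inv_rev {n : ℕ} (f : Fin n → Fin 2 × Bool) :
    List.ofFn (fun i ↦ (f i.rev)⁻¹) = wordInv (List.ofFn f) := by
  refine List.ext_getElem (by simp [wordInv]) fun i _ _ ↦ ?_
  simp only [wordInv, List.getElem_reverse, List.getElem_map, List.getElem_ofFn, List.length_map,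
    List.length_ofFn]
  refine congrArg (fun j ↦ (f j)⁻¹) (Fin.ext ?_)
  rw [Fin.val_rev]
  change n - (i + 1) = n - 1 - i
  omega

theorem neg_one_sub_eq_rev {n : ℕ} (i : ZMod (n + 1)) :
    -1 - i = (Fin.rev (n := n + 1) i : Fin (n + 1)) := by
  have neg_one_eq_last : (-1 : ZMod (n + 1)) = Fin.last n := Fin.ext Fin.coe_neg_one
  rw [neg_one_eq_last]
  exact Fin.last_sub i

/-- Reading a cyclic word from position `0` identifies cyclic words with cyclically reduced words.
The length is written `n + 1` because `ZMod (n + 1)` is `Fin (n + 1)` by definition. -/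
noncomputable def cyclicWordEquiv (n : ℕ) :
    CyclicWord (Fin 2 × Bool) (n + 1) ≃ CRWord (n + 1) :=
  Equiv.ofBijective (fun w ↦
    ⟨List.ofFn (n := n + 1) w, List.length_ofFn, (cyclicallyReduced_ofFn_iff w).2 w.rel⟩) <| by
  refine ⟨fun w w' h ↦ DFunLike.coe_injective (List.ofFn_injective (congrArg Subtype.val h)), ?_⟩
  rintro ⟨l, hl, hred⟩
  obtain ⟨f, rfl⟩ : ∃ f : Fin (n + 1) → Fin 2 × Bool, List.ofFn f = l := by
    rw [← hl]
    exact ⟨_, List.ofFn_getElem⟩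
  exact ⟨⟨f, (cyclicallyReduced_ofFn_iff f).1 hred⟩, rfl⟩

theorem cyclicWordEquiv_r_one_smul {n : ℕ} (w : CyclicWord (Fin 2 × Bool) (n + 1)) :
    (cyclicWordEquiv n (r (1 : ZMod (n + 1)) • w)).1 = (cyclicWordEquiv n w).1.rotate 1 :=
  (congrArg (List.ofFn (n := n + 1)) (funext (CyclicWord.r_smul_apply 1 w))).trans
    (ofFn_add_one (n := n) w)

theorem cyclicWordEquiv_sr_zero_smul {n : ℕ} (w : CyclicWord (Fin 2 × Bool) (n + 1)) :
    (cyclicWordEquiv n (sr (0 : ZMod (n + 1)) • w)).1 = wordInv (cyclicWordEquiv n w).1 := by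
  have smul_apply (i : ZMod (n + 1)) :
      (sr (0 : ZMod (n + 1)) • w) i = (w (Fin.rev (n := n + 1) i : Fin (n + 1)))⁻¹ := by
    rw [CyclicWord.sr_smul_apply, zero_sub, neg_one_sub_eq_rev]
  exact (congrArg (List.ofFn (n := n + 1)) (funext smul_apply)).trans (ofFn_inv_rev (n := n + 1) w)

theorem braceletStep_cyclicWordEquiv_iff {n : ℕ} (w w' : CyclicWord (Fin 2 × Bool) (n + 1)) :
    braceletStep (n + 1) (cyclicWordEquiv n w) (cyclicWordEquiv n w') ↔
      ∃ g ∈ ({r 1, sr 0} : Set (DihedralGroup (n + 1))), g • w = w' := by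
  rw [braceletStep, ← cyclicWordEquiv_r_one_smul, ← cyclicWordEquiv_sr_zero_smul]
  simp only [Set.mem_insert_iff, Set.mem_singleton_iff, exists_eq_or_imp, exists_eq_left]
  refine or_congr ?_ ?_ <;>
    exact Subtype.ext_iff.symm.trans ((cyclicWordEquiv n).apply_eq_iff_eq.trans eq_comm)

theorem braceletCount_eq_card_orbits (n : ℕ) [NeZero n] :
    braceletCount n =
      Nat.card (MulAction.orbitRel.Quotient (DihedralGroup n) (CyclicWord (Fin 2 × Bool) n)) := by
  obtain ⟨m, rfl⟩ := Nat.exists_eq_add_one_of_ne_zero (NeZero.ne n)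
  exact Nat.card_congr <|
    (Quot.congr (cyclicWordEquiv m) fun w w' ↦
      (braceletStep_cyclicWordEquiv_iff w w').symm).symm.trans <|
      quotSMulEquivOrbits (dihedralGroup_closure_r_one_sr_zero _)

theorem card_cyclicWord_letter (n : ℕ) [NeZero n] :
    Nat.card (CyclicWord (Fin 2 × Bool) n) = 3 ^ n + if Even n then 3 else 1 := by
  have card_eq := card_cyclicWord (α := Fin 2 × Bool) (by decide) n
  norm_num at card_eq
  exact_mod_cast card_eq

theorem braceletCount_eq_general (n : ℕ) [NeZero n] :
    braceletCount n * (2 * n) =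
      ∑ d ∈ n.divisors, φ (n / d) * (3 ^ d + if Even d then 3 else 1) := by
  rw [braceletCount_eq_card_orbits, card_dihedral_orbits_cyclicWord (by decide)]
  refine Finset.sum_congr rfl fun d hd ↦ ?_
  have : NeZero d := ⟨(Nat.pos_of_mem_divisors hd).ne'⟩
  rw [card_cyclicWord_letter]

end Bracelet

/-- The counts of reduced bracelets on two generators of lengths 1 through 10. -/
theorem braceletCount_eq :
    braceletCount 1 = 2 ∧ braceletCount 2 = 4 ∧ braceletCount 3 = 6 ∧
    braceletCount 4 = 13 ∧ braceletCount 5 = 26 ∧ braceletCount 6 = 66 ∧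
    braceletCount 7 = 158 ∧ braceletCount 8 = 418 ∧ braceletCount 9 = 1098 ∧
    braceletCount 10 = 2968 := by
  and_intros <;>
    exact Nat.eq_of_mul_eq_mul_right (by decide) ((braceletCount_eq_general _).trans (by decide))
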